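/- arXiv:2604.08616 — 5 statements merged into one kernel-verified Lean document; each statement's English description precedes it below -/
import Mathlib

section
/- Let α ∈ (1/2, 1), π > 0, and real numbers z_A, z_B, z_C with 0 < z_C ≤ z_B < z_A < 1. Then (1−α) + (2α−1)·(1 − z_C/(z_A^{π/(1+π)} · z_B^{1/(1+π)})) > (1−α) + (2α−1)·(1 − z_C/z_B). Equivalently, the center's equilibrium time-0 concession atom F_C*(0) = 1 − z_C/(z_A^{π/(1+π)} z_B^{1/(1+π)}) strictly exceeds the bilateral AG atom F^{AG}_{CB}(0) = 1 − z_C/z_B, so the weak peripheral's equilibrium payoff v_B* strictly exceeds its bilateral AG benchmark payoff v^{AG}_{BC}. -/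
/-- Proposition 2, case 2: when `0 < zC ≤ zB < zA < 1`, the weak peripheral's
multilateral payoff `(1−α) + (2α−1)(1 − zC/(zA^{π/(1+π)} zB^{1/(1+π)}))`
strictly exceeds the bilateral AG benchmark `(1−α) + (2α−1)(1 − zC/zB)`. -/
theorem stmt_3 (alpha pi zA zB zC : ℝ) (ha1 : 1 / 2 < alpha) (ha2 : alpha < 1)
    (hpi : 0 < pi) (hzC : 0 < zC) (hCB : zC ≤ zB) (hBA : zB < zA) (hA1 : zA < 1) :
    (1 - alpha) + (2 * alpha - 1) *
        (1 - zC / (zA ^ (pi / (1 + pi)) * zB ^ (1 / (1 + pi)))) >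
      (1 - alpha) + (2 * alpha - 1) * (1 - zC / zB) := by
  have hB : 0 < zB := lt_of_lt_of_le hzC hCB
  have hp : 0 < 1 + pi := by linarith
  have h1 : zB ^ (pi / (1 + pi)) * zB ^ (1 / (1 + pi)) = zB := by
    rw [← Real.rpow_add hB]
    have : pi / (1 + pi) + 1 / (1 + pi) = 1 := by field_simp; ring
    rw [this, Real.rpow_one]
  have h2 : zB ^ (pi / (1 + pi)) < zA ^ (pi / (1 + pi)) :=
    Real.rpow_lt_rpow hB.le hBA (div_pos hpi hp)
  have h3 : zB < zA ^ (pi / (1 + pi)) * zB ^ (1 / (1 + pi)) := by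
    have := mul_lt_mul_of_pos_right h2 (Real.rpow_pos_of_pos hB (1 / (1 + pi)))
    rwa [h1] at this
  have h4 : zC / (zA ^ (pi / (1 + pi)) * zB ^ (1 / (1 + pi))) < zC / zB :=
    div_lt_div_of_pos_left hzC hB h3
  have h5 : 0 < 2 * alpha - 1 := by linarith
  have h6 := mul_lt_mul_of_pos_left h4 h5
  linarith
end

section
/- Let α ∈ (1/2, 1), π > 0, and real numbers z_A, z_B, z_C with 0 < z_B < z_C < z_A < 1. Define the center's multilateral equilibrium payoff v_C* by: v_C* = (1−α)(π+1) if z_C^{1+π} < z_A^π·z_B (the center bears the time-0 atom), and v_C* = (1−α)(π+1) + (2α−1)·(1 − z_B·z_A^π/z_C^{1+π}) otherwise (the weak peripheral bears the atom). Then in both cases v_C* < (1−α)(π+1) + (2α−1)·(1 − z_B/z_C), i.e., the center's equilibrium payoff is strictly below the sum of her two bilateral AG benchmark payoffs v^{AG}_{CA} + v^{AG}_{CB}. -/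
/-- Proposition 2, case 3 (center's loss): under `0 < zB < zC < zA < 1`, the
center's multilateral equilibrium payoff (in either subcase of who bears the
time-0 atom) is strictly below the sum of her two bilateral AG benchmark
payoffs `(1−α)(π+1) + (2α−1)(1 − zB/zC)`. -/
theorem stmt_4 (alpha pi zA zB zC : ℝ) (ha1 : 1 / 2 < alpha) (ha2 : alpha < 1)
    (hpi : 0 < pi) (hzB : 0 < zB) (hBC : zB < zC) (hCA : zC < zA) (hA1 : zA < 1) :
    (if zC ^ (1 + pi) < zA ^ pi * zB
      then (1 - alpha) * (pi + 1)
      else (1 - alpha) * (pi + 1) +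
        (2 * alpha - 1) * (1 - zB * zA ^ pi / zC ^ (1 + pi)))
    < (1 - alpha) * (pi + 1) + (2 * alpha - 1) * (1 - zB / zC) := by
  have hC : 0 < zC := hzB.trans hBC
  have h2 : 0 < 2 * alpha - 1 := by linarith
  have hp : zC ^ pi < zA ^ pi := Real.rpow_lt_rpow hC.le hCA hpi
  have hCp : 0 < zC ^ pi := Real.rpow_pos_of_pos hC pi
  split_ifs with h
  · have h3 : zB / zC < 1 := (div_lt_one hC).2 hBC
    have h4 := mul_pos h2 (sub_pos.2 h3)
    linarith
  · have h3 : zB / zC < zB * zA ^ pi / zC ^ (1 + pi) := by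
      rw [Real.rpow_add hC, Real.rpow_one, div_lt_div_iff₀ hC (mul_pos hC hCp)]
      have h5 := mul_lt_mul_of_pos_left hp (mul_pos hzB hC)
      linarith
    have h4 := mul_lt_mul_of_pos_left h3 h2
    linarith
end

section
/- Let z_A, z_B be real numbers with 0 < z_B < z_A < 1. Then the function π ↦ z_A^{π/(1+π)} · z_B^{1/(1+π)} is strictly increasing on (0, ∞). Consequently, for any fixed z_C > 0, the time-0 atom size π ↦ 1 − z_C/(z_A^{π/(1+π)} · z_B^{1/(1+π)}) is strictly increasing in π. -/
/-- Comparative static in the stakes π: for `0 < zB < zA < 1`, the map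
`π ↦ zA^{π/(1+π)} zB^{1/(1+π)}` is strictly increasing on `(0, ∞)`, and hence
for any fixed `zC > 0` so is the time-0 atom size
`π ↦ 1 − zC/(zA^{π/(1+π)} zB^{1/(1+π)})`. -/
theorem stmt_5 (zA zB : ℝ) (hzB : 0 < zB) (hBA : zB < zA) (hA1 : zA < 1) :
    StrictMonoOn (fun pi : ℝ => zA ^ (pi / (1 + pi)) * zB ^ (1 / (1 + pi)))
      (Set.Ioi 0) ∧
    ∀ zC : ℝ, 0 < zC →
      StrictMonoOn
        (fun pi : ℝ => 1 - zC / (zA ^ (pi / (1 + pi)) * zB ^ (1 / (1 + pi))))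
        (Set.Ioi 0) := by
  have hA : 0 < zA := hzB.trans hBA
  have key : StrictMonoOn (fun pi : ℝ => zA ^ (pi / (1 + pi)) * zB ^ (1 / (1 + pi)))
      (Set.Ioi 0) := by
    intro x hx y hy hxy
    have hx0 : (0 : ℝ) < x := hx
    have hy0 : (0 : ℝ) < y := hy
    have hlog : Real.log zB < Real.log zA := Real.log_lt_log hzB hBA
    have h1 : 1 / (1 + y) < 1 / (1 + x) :=
      one_div_lt_one_div_of_lt (by linarith) (by linarith)
    have e1 : x / (1 + x) = 1 - 1 / (1 + x) := by
      have : 1 + x ≠ 0 := by positivity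
      field_simp
      ring
    have e2 : y / (1 + y) = 1 - 1 / (1 + y) := by
      have : 1 + y ≠ 0 := by positivity
      field_simp
      ring
    show zA ^ (x / (1 + x)) * zB ^ (1 / (1 + x)) < zA ^ (y / (1 + y)) * zB ^ (1 / (1 + y))
    rw [e1, e2, Real.rpow_def_of_pos hA, Real.rpow_def_of_pos hA, Real.rpow_def_of_pos hzB,
      Real.rpow_def_of_pos hzB, ← Real.exp_add, ← Real.exp_add, Real.exp_lt_exp]
    nlinarith [mul_pos (sub_pos.2 hlog) (sub_pos.2 h1)]
  refine ⟨key, ?_⟩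
  intro zC hC x hx y hy hxy
  have h := key hx hy hxy
  have hp : 0 < zA ^ (x / (1 + x)) * zB ^ (1 / (1 + x)) :=
    mul_pos (Real.rpow_pos_of_pos hA _) (Real.rpow_pos_of_pos hzB _)
  exact sub_lt_sub_left (div_lt_div_of_pos_left hC hp h) 1
end

section
/- Let λ > 0, π > 0, and real numbers z_A, z_B, z_C with 0 < z_B < z_A < 1, 0 < z_C < z_A, and z_C^{1+π} < z_A^π · z_B. Define t* = log(z_A/z_B)/((1+π)λ), the multilateral terminal time T = t* + (−log z_A)/λ, and the bilateral terminal times T^{AG}_{AC} = (−log z_A)/λ and T^{AG}_{BC} = (−log z_C)/λ. Then T > T^{AG}_{AC} and T < T^{AG}_{BC}. -/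
/-- Terminal-time comparison: with `t* = log(zA/zB)/((1+π)λ)`, the multilateral
terminal time `T = t* + (−log zA)/λ` exceeds the bilateral A–C terminal time
`(−log zA)/λ` but is shorter than the bilateral B–C terminal time
`(−log zC)/λ`. -/
theorem stmt_6 (lam pi zA zB zC : ℝ) (hlam : 0 < lam) (hpi : 0 < pi)
    (hzB : 0 < zB) (hBA : zB < zA) (hA1 : zA < 1) (hzC : 0 < zC) (hCA : zC < zA)
    (hlag : zC ^ (1 + pi) < zA ^ pi * zB) :
    Real.log (zA / zB) / ((1 + pi) * lam) + (-Real.log zA) / lam >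
      (-Real.log zA) / lam ∧
    Real.log (zA / zB) / ((1 + pi) * lam) + (-Real.log zA) / lam <
      (-Real.log zC) / lam := by
  have hzA : 0 < zA := hzB.trans hBA
  have h1 : 0 < 1 + pi := by linarith
  have hlog := Real.log_lt_log (Real.rpow_pos_of_pos hzC _) hlag
  rw [Real.log_mul (Real.rpow_pos_of_pos hzA _).ne' hzB.ne', Real.log_rpow hzC,
    Real.log_rpow hzA] at hlog
  have hab := Real.log_lt_log hzB hBA
  rw [Real.log_div hzA.ne' hzB.ne']
  constructor
  · have : 0 < (Real.log zA - Real.log zB) / ((1 + pi) * lam) :=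
      div_pos (by linarith) (mul_pos h1 hlam)
    linarith
  · rw [← div_div, ← add_div]
    apply div_lt_div_of_pos_right _ hlam
    have : (Real.log zA - Real.log zB) / (1 + pi) < Real.log zA - Real.log zC := by
      rw [div_lt_iff₀ h1]
      nlinarith
    linarith
end

section
/- Let λ > 0, T > 0, and let h : [0, T] → ℝ be differentiable with h'(t) = λ·h(t)·((−1 + √(1 + 4·h(t)))/2 − 1) for all t ∈ [0, T], and h(T) = 1. Then for every t ∈ [0, T), 1 < h(t) < 2. -/
/-- A solution of a linear ODE `y' = g y` with positive terminal value stays positive. -/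
theorem lin_pos (T : ℝ) (y g : ℝ → ℝ)
    (hg : ContinuousOn g (Set.Icc 0 T))
    (hy : ∀ t ∈ Set.Icc (0 : ℝ) T, HasDerivAt y (g t * y t) t) (hyT : 0 < y T) :
    ∀ t ∈ Set.Icc (0 : ℝ) T, 0 < y t := by
  intro t ht
  by_contra hneg
  push Not at hneg
  have hc : ContinuousOn y (Set.Icc 0 T) := fun s hs => (hy s hs).continuousAt.continuousWithinAt
  obtain ⟨s, hs, hs0⟩ : (0 : ℝ) ∈ y '' Set.Icc t T :=
    intermediate_value_Icc ht.2 (hc.mono (Set.Icc_subset_Icc_left ht.1)) ⟨hneg, hyT.le⟩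
  obtain ⟨K, hK⟩ := isCompact_Icc.exists_bound_of_continuousOn hg
  have hsub : Set.Icc s T ⊆ Set.Icc 0 T := Set.Icc_subset_Icc_left (ht.1.trans hs.1)
  have := ODE_solution_unique_of_mem_Icc_right (v := fun t x => g t * x) (K := K.toNNReal)
    (s := fun _ => Set.univ) (f := y) (g := fun _ => (0 : ℝ)) (a := s) (b := T)
    (fun r hr => by
      refine LipschitzOnWith.of_dist_le_mul fun x _ z _ => ?_
      rw [Real.dist_eq, Real.dist_eq, ← mul_sub, abs_mul]
      refine mul_le_mul_of_nonneg_right ?_ (abs_nonneg _)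
      exact (hK r (hsub (Set.Ico_subset_Icc_self hr))).trans (Real.le_coe_toNNReal K))
    (hc.mono hsub)
    (fun r hr => (hy r (hsub (Set.Ico_subset_Icc_self hr))).hasDerivWithinAt)
    (fun _ _ => trivial) continuousOn_const
    (fun r _ => by simpa using hasDerivWithinAt_const r (Set.Ici r) (0 : ℝ))
    (fun _ _ => trivial) hs0
  have h2 := this (Set.right_mem_Icc.2 hs.2)
  simp only at h2
  linarith

/-- Partial observability (Step 2 of Prop. C.1): if `h` solves the ODE
`h'(t) = λ·h(t)·((−1+√(1+4h(t)))/2 − 1)` on `[0,T]` with terminal condition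
`h(T) = 1`, then `1 < h(t) < 2` for every `t ∈ [0, T)`. -/
theorem stmt_19 (lam T : ℝ) (h : ℝ → ℝ) (hlam : 0 < lam) (hT : 0 < T)
    (hderiv : ∀ t ∈ Set.Icc (0 : ℝ) T,
      HasDerivAt h (lam * h t * ((-1 + Real.sqrt (1 + 4 * h t)) / 2 - 1)) t)
    (hTval : h T = 1) :
    ∀ t ∈ Set.Ico (0 : ℝ) T, 1 < h t ∧ h t < 2 := by
  have hc : ContinuousOn h (Set.Icc 0 T) :=
    fun s hs => (hderiv s hs).continuousAt.continuousWithinAt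
  have hsq : ContinuousOn (fun t => Real.sqrt (1 + 4 * h t)) (Set.Icc 0 T) :=
    (continuousOn_const.add (continuousOn_const.mul hc)).sqrt
  have hpos := lin_pos T h (fun t => lam * ((-1 + Real.sqrt (1 + 4 * h t)) / 2 - 1))
    (by fun_prop)
    (fun t ht => by
      convert hderiv t ht using 1
      ring) (by linarith)
  have hlt := lin_pos T (fun t => 2 - h t) (fun t => lam * h t * 2 / (Real.sqrt (1 + 4 * h t) + 3))
    (by
      refine ContinuousOn.div (by fun_prop) (by fun_prop) fun t _ => ?_
      positivity)
    (fun t ht => by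
      have h0 := hpos t ht
      have h1 : Real.sqrt (1 + 4 * h t) ^ 2 = 1 + 4 * h t := Real.sq_sqrt (by linarith)
      have h2 := Real.sqrt_nonneg (1 + 4 * h t)
      have h3 : Real.sqrt (1 + 4 * h t) + 3 ≠ 0 := by positivity
      have key : lam * h t * 2 / (Real.sqrt (1 + 4 * h t) + 3) * (2 - h t)
          = -(lam * h t * ((-1 + Real.sqrt (1 + 4 * h t)) / 2 - 1)) := by
        rw [div_mul_eq_mul_div, div_eq_iff h3]
        linear_combination (lam * h t / 2) * h1
      simp only [key]
      exact (hderiv t ht).const_sub 2) (by simp only [hTval]; norm_num)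
  have hanti : StrictAntiOn h (Set.Icc 0 T) := by
    refine strictAntiOn_of_deriv_neg (convex_Icc 0 T) hc fun t ht => ?_
    have ht' := interior_subset ht
    rw [(hderiv t ht').deriv]
    have h0 := hpos t ht'
    have h1 := hlt t ht'
    have h2 : Real.sqrt (1 + 4 * h t) < 3 := by
      rw [Real.sqrt_lt' (by norm_num)]
      linarith
    exact mul_neg_of_pos_of_neg (by positivity) (by linarith)
  intro t ht
  have ht' := Set.Ico_subset_Icc_self ht
  refine ⟨?_, by linarith [hlt t ht']⟩
  rw [← hTval]
  exact hanti ht' (Set.right_mem_Icc.2 hT.le) ht.2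
end
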